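/- arXiv:2110.15523 — 5 statements merged into one kernel-verified Lean document; each statement's English description precedes it below -/
import Mathlib

section
/- Let N ≥ 1, m ≥ 3, and let φ : V → ℂ satisfy L(B_N)φ = λφ together with φ(𝟘) = φ(𝟙) = 0, where 𝟘 and 𝟙 are the all-zeros and all-ones vertices. Then for every k ∈ ZMod m the extension-by-zero ι_k φ satisfies L(B_N ⊢ C_m)(ι_k φ) = λ · ι_k φ, and ι_k φ vanishes outside the k-th cube block. -/
/-!
The bridge joining `(𝟙, l)` to `(𝟘, l + 1)` contributes nothing to the Laplacian of a function
taking equal values at its two ends. A function vanishing at `𝟘` and `𝟙` extends by zero to such a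
function, so the Laplacian of `B_N ⊢ C_m` acts on the extension block by block, as that of the cube.
-/

open Complex Finset
open scoped Real Classical

noncomputable section

/-- Vertices of the Boolean cube B_N. -/
abbrev Vtx (N : ℕ) := Fin N → ZMod 2

/-- The all-zeros vertex 𝟘. -/
def vZero (N : ℕ) : Vtx N := fun _ => 0

/-- The all-ones vertex 𝟙. -/
def vOne (N : ℕ) : Vtx N := fun _ => 1

/-- Cube adjacency: differ in exactly one coordinate. -/
def cubeAdj {N : ℕ} (v w : Vtx N) : Prop :=
  (Finset.univ.filter fun i => v i ≠ w i).card = 1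

instance {N : ℕ} (v w : Vtx N) : Decidable (cubeAdj v w) := by
  unfold cubeAdj; infer_instance

/-- Unnormalized Laplacian of the Boolean cube. -/
def cubeLap (N : ℕ) (f : Vtx N → ℂ) : Vtx N → ℂ :=
  fun v => ∑ w ∈ Finset.univ.filter (fun w => cubeAdj v w), (f v - f w)

/-- Adjacency in the vertex-substitution graph B_N ⊢ C_m: within-cube edges,
plus (𝟙,k) ~ (𝟘,k+1) for every k. -/
def subAdj (N m : ℕ) (x y : Vtx N × ZMod m) : Prop :=
  (x.2 = y.2 ∧ cubeAdj x.1 y.1) ∨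
    (x.1 = vOne N ∧ y.1 = vZero N ∧ y.2 = x.2 + 1) ∨
    (x.1 = vZero N ∧ y.1 = vOne N ∧ x.2 = y.2 + 1)

instance (N m : ℕ) (x y : Vtx N × ZMod m) : Decidable (subAdj N m x y) := by
  unfold subAdj; infer_instance

/-- Unnormalized Laplacian of B_N ⊢ C_m. -/
def subLap (N m : ℕ) [NeZero m] (f : Vtx N × ZMod m → ℂ) : Vtx N × ZMod m → ℂ :=
  fun x => ∑ y ∈ Finset.univ.filter (fun y => subAdj N m x y), (f x - f y)

/-- Extension by zero ι_k of a cube vertex function to B_N ⊢ C_m. -/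
def iota {N m : ℕ} (k : ZMod m) (g : Vtx N → ℂ) : Vtx N × ZMod m → ℂ :=
  fun x => if x.2 = k then g x.1 else 0

section SubstitutionLaplacian

variable {N m : ℕ}

theorem subAdj.cubeAdj_or_apply_eq {α : Type*} {f : Vtx N × ZMod m → α}
    (hf : ∀ l, f (vOne N, l) = f (vZero N, l + 1)) {x y : Vtx N × ZMod m}
    (h : subAdj N m x y) : (x.2 = y.2 ∧ cubeAdj x.1 y.1) ∨ f x = f y := by
  obtain ⟨u, l⟩ := x
  obtain ⟨w, j⟩ := y
  rcases h with hblock | ⟨rfl, rfl, rfl⟩ | ⟨rfl, rfl, rfl⟩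
  · exact Or.inl hblock
  · exact Or.inr (hf l)
  · exact Or.inr (hf j).symm

theorem subLap_apply_of_bridge_eq [NeZero m] {f : Vtx N × ZMod m → ℂ}
    (hf : ∀ l, f (vOne N, l) = f (vZero N, l + 1)) (u : Vtx N) (l : ZMod m) :
    subLap N m f (u, l) = cubeLap N (fun w => f (w, l)) u := by
  symm
  refine Finset.sum_of_injOn (fun w => (w, l)) (Prod.mk_left_injective l).injOn ?_ ?_
    fun _ _ => rfl
  · intro w hw
    simp only [Finset.coe_filter, Finset.mem_univ, true_and, Set.mem_ofPred_eq] at hw ⊢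
    exact Or.inl ⟨rfl, hw⟩
  · rintro ⟨w, j⟩ hy hblock
    rcases (Finset.mem_filter.mp hy).2.cubeAdj_or_apply_eq hf with ⟨rfl, hw⟩ | heq
    · exact absurd ⟨w, by simpa using hw, rfl⟩ hblock
    · exact sub_eq_zero.mpr heq

theorem iota_apply_of_ne {k l : ZMod m} (h : l ≠ k) (g : Vtx N → ℂ) (u : Vtx N) :
    iota k g (u, l) = 0 :=
  if_neg h

theorem iota_apply_eq_zero {g : Vtx N → ℂ} {u : Vtx N} (hg : g u = 0) (k l : ZMod m) :
    iota k g (u, l) = 0 := by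
  simp [iota, hg]

theorem iota_const_mul (k : ZMod m) (c : ℂ) (g : Vtx N → ℂ) :
    iota k (fun v => c * g v) = fun x => c * iota k g x :=
  funext fun _ => (mul_ite_zero ..).symm

theorem cubeLap_iota_block (k l : ZMod m) (g : Vtx N → ℂ) (u : Vtx N) :
    cubeLap N (fun w => iota k g (w, l)) u = iota k (cubeLap N g) (u, l) := by
  by_cases h : l = k <;> simp [cubeLap, iota, h]

theorem subLap_iota [NeZero m] {g : Vtx N → ℂ} (h0 : g (vZero N) = 0) (h1 : g (vOne N) = 0)
    (k : ZMod m) : subLap N m (iota k g) = iota k (cubeLap N g) := by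
  have hbridge (l : ZMod m) : iota k g (vOne N, l) = iota k g (vZero N, l + 1) :=
    (iota_apply_eq_zero h1 k l).trans (iota_apply_eq_zero h0 k (l + 1)).symm
  funext ⟨u, l⟩
  rw [subLap_apply_of_bridge_eq hbridge, cubeLap_iota_block]

end SubstitutionLaplacian

/-- a Dirichlet eigenvector of L(B_N) extends by zero to an
eigenvector of L(B_N ⊢ C_m) with the same eigenvalue, vanishing outside the
k-th cube block. -/
theorem stmt2 (N m : ℕ) [NeZero m] (hN : 1 ≤ N) (hm : 3 ≤ m)
    (φ : Vtx N → ℂ) (lam : ℂ)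
    (heig : cubeLap N φ = fun v => lam * φ v)
    (h0 : φ (vZero N) = 0) (h1 : φ (vOne N) = 0) (k : ZMod m) :
    subLap N m (iota k φ) = (fun x => lam * iota k φ x) ∧
    ∀ (u : Vtx N) (l : ZMod m), l ≠ k → iota k φ (u, l) = 0 := by
  refine ⟨?_, fun u l hl => iota_apply_of_ne hl φ u⟩
  rw [subLap_iota h0 h1, heig, iota_const_mul]
end
end

section
/- Let 0 < K < N and m ≥ 3. The span in ℓ²(V × ZMod m) of all Dirichlet-type 2K-eigenvectors of L(B_N ⊢ C_m) — that is, of all functions ι_k φ where k ∈ ZMod m and φ is a 2K-eigenvector of L(B_N) vanishing at both the all-zeros vertex 𝟘 and the all-ones vertex 𝟙 — has dimension m·(binom(N,K) − 1). -/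
open Complex Finset
open scoped Real Classical

noncomputable section

/-!
The characters `w_S(v) = ∏_{i ∈ S} (-1)^{v_i}` of `(ℤ/2)^N` diagonalise the Laplacian of the cube:
flipping coordinate `i` multiplies `w_S` by `-1` if `i ∈ S` and by `1` otherwise, so `w_S` has
eigenvalue `2|S|`, and the `2K`-eigenspace has dimension `binom(N, K)`. Since
`w_S(𝟙) = (-1)^{|S|} w_S(𝟘)`, a `2K`-eigenvector vanishing at `𝟘` also vanishes at `𝟙`; the two
Dirichlet conditions thus amount to a single nonzero linear functional and cost one dimension.
The `m` layers contribute independently.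
-/

section LinearAlgebra

variable {R M ι : Type*} [CommRing R] [IsDomain R] [AddCommGroup M] [Module R M]
  (b : Module.Basis ι R M) {T : Module.End R M} {d : ι → R}

lemma eigenspace_eq_span_of_basis (hT : ∀ i, T (b i) = d i • b i) (μ : R) :
    T.eigenspace μ = Submodule.span R (b '' {i | d i = μ}) := by
  apply le_antisymm
  · intro x hx
    have repr_map (i : ι) : b.repr (T x) i = d i * b.repr x i := by
      have : b.coord i ∘ₗ T = d i • b.coord i := b.ext fun j ↦ by
        obtain rfl | hij := eq_or_ne j i <;> simp [*]
      exact LinearMap.congr_fun this x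
    have hsupp : ↑(b.repr x).support ⊆ {i | d i = μ} := fun i hi ↦ by
      have : d i * b.repr x i = μ * b.repr x i := by
        rw [← repr_map, Module.End.mem_eigenspace_iff.1 hx, map_smul, Finsupp.smul_apply,
          smul_eq_mul]
      exact mul_right_cancel₀ (Finsupp.mem_support_iff.1 hi) this
    exact b.mem_span_image.2 hsupp
  · rw [Submodule.span_le]
    rintro _ ⟨i, rfl, rfl⟩
    exact Module.End.mem_eigenspace_iff.2 (hT i)

lemma finrank_eigenspace_of_basis [Fintype ι] (hT : ∀ i, T (b i) = d i • b i) (μ : R) :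
    Module.finrank R (T.eigenspace μ) = Fintype.card {i // d i = μ} := by
  rw [eigenspace_eq_span_of_basis b hT, Set.image_eq_range]
  exact finrank_span_eq_card (b.linearIndependent.comp _ Subtype.val_injective)

lemma finrank_inf_ker_add_one {k V : Type*} [Field k] [AddCommGroup V] [Module k V]
    (p : Submodule k V) [FiniteDimensional k p] (f : Module.Dual k V) (hf : ∃ x ∈ p, f x ≠ 0) :
    Module.finrank k ↥(p ⊓ LinearMap.ker f) + 1 = Module.finrank k p := by
  have hne : f.domRestrict p ≠ 0 := by
    obtain ⟨x, hx, hfx⟩ := hf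
    exact fun h ↦ hfx (LinearMap.congr_fun h ⟨x, hx⟩)
  have hker : (LinearMap.ker (f.domRestrict p)).map p.subtype = p ⊓ LinearMap.ker f := by
    rw [LinearMap.ker_domRestrict]
    exact Submodule.map_comap_subtype p _
  rw [← hker, Submodule.finrank_map_subtype_eq]
  exact Module.Dual.finrank_ker_add_one_of_ne_zero hne

end LinearAlgebra

section Cube

variable {N : ℕ}

lemma cubeAdj_iff_exists_eq_add_single {v w : Vtx N} :
    cubeAdj v w ↔ ∃ i, w = v + Pi.single i 1 := by
  have ne_iff : ∀ a b : ZMod 2, a ≠ b ↔ b = a + 1 := by decide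
  rw [cubeAdj, Finset.card_eq_one]
  refine exists_congr fun i ↦ ?_
  rw [Finset.ext_iff, funext_iff]
  refine forall_congr' fun j ↦ ?_
  obtain rfl | hj := eq_or_ne j i
  · simp [ne_iff]
  · simp [hj, eq_comm]

lemma cubeLap_apply (f : Vtx N → ℂ) (v : Vtx N) :
    cubeLap N f v = ∑ i, (f v - f (v + Pi.single i 1)) := by
  have neighbors_eq : Finset.univ.filter (fun w ↦ cubeAdj v w) =
      Finset.univ.image fun i ↦ v + Pi.single i 1 := by
    ext w
    simp [cubeAdj_iff_exists_eq_add_single, eq_comm]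
  have flip_injective : Function.Injective fun i : Fin N ↦ v + Pi.single i (1 : ZMod 2) :=
    (add_right_injective v).comp fun i j h ↦ by
      simpa [Pi.single_apply] using congrFun h i
  rw [cubeLap, neighbors_eq, Finset.sum_image flip_injective.injOn]

/-- The Laplacian of the Boolean cube, `cubeLap`, as an endomorphism, so that its eigenspaces are
available. -/
def cubeLapEnd (N : ℕ) : Module.End ℂ (Vtx N → ℂ) where
  toFun := cubeLap N
  map_add' f g := by
    ext v
    simp only [cubeLap_apply, Pi.add_apply, ← Finset.sum_add_distrib, add_sub_add_comm]
  map_smul' c f := by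
    ext v
    simp only [cubeLap_apply, Pi.smul_apply, ← smul_sub, ← Finset.smul_sum, RingHom.id_apply]

/-- The Walsh character `v ↦ ∏_{i ∈ S} (-1)^{v i}` of the group `(ℤ/2)^N`; these are the
eigenvectors of the Laplacian of the cube. -/
def walshChar (S : Finset (Fin N)) : AddChar (Vtx N) ℂ :=
  ∏ i ∈ S, (AddChar.zmodChar 2 (neg_one_sq (R := ℂ))).compAddMonoidHom (Pi.evalAddMonoidHom _ i)

lemma walshChar_apply (S : Finset (Fin N)) (v : Vtx N) :
    walshChar S v = ∏ i ∈ S, (-1) ^ (v i).val := by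
  simp [walshChar, AddChar.prod_apply, AddChar.zmodChar_apply]

lemma walshChar_single (S : Finset (Fin N)) (i : Fin N) :
    walshChar S (Pi.single i 1) = if i ∈ S then -1 else 1 := by
  have factor_eq (j : Fin N) :
      (-1 : ℂ) ^ ((Pi.single i 1 : Vtx N) j).val = if i = j then -1 else 1 := by
    obtain rfl | hij := eq_or_ne i j
    · simp [ZMod.val_one]
    · simp [hij, hij.symm]
  simp only [walshChar_apply, factor_eq, Finset.prod_ite_eq]

lemma walshChar_vZero (S : Finset (Fin N)) : walshChar S (vZero N) = 1 :=
  AddChar.map_zero_eq_one _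

lemma walshChar_vOne (S : Finset (Fin N)) : walshChar S (vOne N) = (-1) ^ S.card := by
  simp [walshChar_apply, vOne, ZMod.val_one]

lemma walshChar_injective : Function.Injective (walshChar (N := N)) := by
  have mem_iff (S : Finset (Fin N)) (i : Fin N) :
      i ∈ S ↔ walshChar S (Pi.single i 1) = -1 := by
    rw [walshChar_single]
    split_ifs with hi <;> norm_num [hi]
  intro S T h
  ext i
  rw [mem_iff, mem_iff, h]

/-- The basis of functions on the Boolean cube formed by the Walsh characters. -/
def walshBasis (N : ℕ) : Module.Basis (Finset (Fin N)) ℂ (Vtx N → ℂ) :=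
  basisOfLinearIndependentOfCardEqFinrank
    ((AddChar.linearIndependent (Vtx N) ℂ).comp _ walshChar_injective) (by simp [ZMod.card])

lemma walshBasis_apply (S : Finset (Fin N)) : walshBasis N S = walshChar S := by
  simp [walshBasis]

lemma cubeLapEnd_walshBasis (S : Finset (Fin N)) :
    cubeLapEnd N (walshBasis N S) = ((2 * S.card : ℕ) : ℂ) • walshBasis N S := by
  rw [walshBasis_apply]
  ext v
  calc cubeLap N (walshChar S) v
      = ∑ i, (walshChar S v - walshChar S v * if i ∈ S then -1 else 1) := by
        simp only [cubeLap_apply, AddChar.map_add_eq_mul, walshChar_single]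
    _ = ∑ i, if i ∈ S then 2 * walshChar S v else 0 := by
        refine Finset.sum_congr rfl fun i _ ↦ ?_
        split_ifs <;> ring
    _ = ((2 * S.card : ℕ) : ℂ) * walshChar S v := by
        simp
        ring

end Cube

section DirichletEigenspace

variable {N K : ℕ}

lemma finrank_eigenspace_cubeLapEnd (N K : ℕ) :
    Module.finrank ℂ ((cubeLapEnd N).eigenspace ((2 * K : ℕ) : ℂ)) = N.choose K := by
  simp [finrank_eigenspace_of_basis (walshBasis N) cubeLapEnd_walshBasis]

lemma apply_vOne_of_mem_eigenspace {φ : Vtx N → ℂ}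
    (hφ : φ ∈ (cubeLapEnd N).eigenspace ((2 * K : ℕ) : ℂ)) :
    φ (vOne N) = (-1) ^ K * φ (vZero N) := by
  rw [eigenspace_eq_span_of_basis (walshBasis N) cubeLapEnd_walshBasis] at hφ
  refine LinearMap.eqOn_span (f := LinearMap.proj (vOne N))
    (g := (-1 : ℂ) ^ K • LinearMap.proj (vZero N)) ?_ hφ
  rintro _ ⟨S, hS, rfl⟩
  have hcard : S.card = K := by simpa using hS
  simp [walshBasis_apply, walshChar_vOne, walshChar_vZero, hcard]

/-- The space of `2K`-eigenvectors of the Laplacian of the cube that vanish at the all-zeros and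
all-ones vertices: those whose extension by zero to a layer of `B_N ⊢ C_m` is an eigenvector. -/
def dirichletEigenspace (N K : ℕ) : Submodule ℂ (Vtx N → ℂ) :=
  (cubeLapEnd N).eigenspace ((2 * K : ℕ) : ℂ) ⊓
    (LinearMap.ker (LinearMap.proj (vZero N)) ⊓ LinearMap.ker (LinearMap.proj (vOne N)))

lemma mem_dirichletEigenspace {φ : Vtx N → ℂ} :
    φ ∈ dirichletEigenspace N K ↔
      cubeLap N φ = (fun v ↦ ((2 * K : ℕ) : ℂ) * φ v) ∧ φ (vZero N) = 0 ∧ φ (vOne N) = 0 := by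
  simp only [dirichletEigenspace, Submodule.mem_inf, Module.End.mem_eigenspace_iff,
    LinearMap.mem_ker, LinearMap.proj_apply]
  rfl

lemma dirichletEigenspace_eq_inf_ker (N K : ℕ) :
    dirichletEigenspace N K = (cubeLapEnd N).eigenspace ((2 * K : ℕ) : ℂ) ⊓
      LinearMap.ker (LinearMap.proj (vZero N)) := by
  refine le_antisymm (inf_le_inf_left _ inf_le_left) fun φ ⟨hφ, h₀⟩ ↦ ⟨hφ, h₀, ?_⟩
  have h₀ : φ (vZero N) = 0 := h₀
  have h₁ : φ (vOne N) = 0 := by rw [apply_vOne_of_mem_eigenspace hφ, h₀, mul_zero]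
  exact h₁

lemma finrank_dirichletEigenspace (hKN : K ≤ N) :
    Module.finrank ℂ (dirichletEigenspace N K) = N.choose K - 1 := by
  obtain ⟨S, -, hS⟩ := Finset.exists_subset_card_eq (s := (Finset.univ : Finset (Fin N)))
    (by simpa using hKN)
  have hmem : walshBasis N S ∈ (cubeLapEnd N).eigenspace ((2 * K : ℕ) : ℂ) := by
    rw [Module.End.mem_eigenspace_iff, cubeLapEnd_walshBasis, hS]
  have hne : walshBasis N S (vZero N) ≠ 0 := by simp [walshBasis_apply, walshChar_vZero]
  rw [dirichletEigenspace_eq_inf_ker, ← finrank_eigenspace_cubeLapEnd,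
    ← finrank_inf_ker_add_one _ (LinearMap.proj (vZero N)) ⟨_, hmem, hne⟩, Nat.add_sub_cancel]

end DirichletEigenspace

section Layers

variable {N : ℕ} (m : ℕ) (W : Submodule ℂ (Vtx N → ℂ))

/-- The function on the vertices of `B_N ⊢ C_m` assembled from one element of `W` per layer. -/
def ofLayers : (ZMod m → W) →ₗ[ℂ] (Vtx N × ZMod m → ℂ) where
  toFun g x := (g x.2).1 x.1
  map_add' _ _ := rfl
  map_smul' _ _ := rfl

lemma ofLayers_injective : Function.Injective (ofLayers m W) := by
  intro g h hgh
  ext k v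
  exact congrFun hgh (v, k)

lemma ofLayers_single (k : ZMod m) (φ : W) :
    ofLayers m W (Pi.single k φ) = iota k (φ : Vtx N → ℂ) := by
  ext ⟨u, l⟩
  obtain rfl | hl := eq_or_ne l k <;> simp [ofLayers, iota, *]

lemma range_ofLayers [NeZero m] :
    LinearMap.range (ofLayers m W) =
      Submodule.span ℂ {F | ∃ k : ZMod m, ∃ φ ∈ W, F = iota k φ} := by
  apply le_antisymm
  · rintro _ ⟨g, rfl⟩
    rw [← Finset.univ_sum_single g, map_sum]
    refine Submodule.sum_mem _ fun k _ ↦ Submodule.subset_span ?_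
    exact ⟨k, g k, (g k).2, ofLayers_single m W k (g k)⟩
  · rw [Submodule.span_le]
    rintro _ ⟨k, φ, hφ, rfl⟩
    exact ⟨Pi.single k ⟨φ, hφ⟩, ofLayers_single m W k ⟨φ, hφ⟩⟩

lemma finrank_span_iota [NeZero m] :
    Module.finrank ℂ ↥(Submodule.span ℂ {F | ∃ k : ZMod m, ∃ φ ∈ W, F = iota k φ}) =
      m * Module.finrank ℂ W := by
  rw [← range_ofLayers, LinearMap.finrank_range_of_inj (ofLayers_injective m W),
    Module.finrank_pi_fintype, Finset.sum_const, Finset.card_univ, ZMod.card, smul_eq_mul]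

end Layers

/-- the span of all Dirichlet-type 2K-eigenvectors of
L(B_N ⊢ C_m) — all ι_k φ with φ a 2K-eigenvector of L(B_N) vanishing at 𝟘
and 𝟙 — has dimension m·(binom(N,K) − 1). -/
theorem stmt4 (N K m : ℕ) [NeZero m] (hK : 0 < K) (hKN : K < N) (hm : 3 ≤ m) :
    Module.finrank ℂ
      ↥(Submodule.span ℂ
        {F : Vtx N × ZMod m → ℂ | ∃ (k : ZMod m) (φ : Vtx N → ℂ),
          cubeLap N φ = (fun v => ((2 * K : ℕ) : ℂ) * φ v) ∧
          φ (vZero N) = 0 ∧ φ (vOne N) = 0 ∧ F = iota k φ}) =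
      m * (N.choose K - 1) := by
  have hset : {F : Vtx N × ZMod m → ℂ | ∃ (k : ZMod m) (φ : Vtx N → ℂ),
        cubeLap N φ = (fun v => ((2 * K : ℕ) : ℂ) * φ v) ∧
        φ (vZero N) = 0 ∧ φ (vOne N) = 0 ∧ F = iota k φ} =
      {F | ∃ k : ZMod m, ∃ φ ∈ dirichletEigenspace N K, F = iota k φ} := by
    simp only [mem_dirichletEigenspace, and_assoc]
  rw [hset, finrank_span_iota, finrank_dirichletEigenspace hKN.le]
end
end

section
/- For each 0 ≤ K ≤ N, the Neumann vector h_{n,K} = binom(N,K)^{−1/2} Σ_{|γ|=K} h_γ is a unit eigenvector of L(B_N) with eigenvalue 2K; the vectors h_{n,K} are mutually orthogonal for different K; and ⟨φ, h_{n,K}⟩ = 0 for every eigenvector φ of L(B_N) that vanishes at both the all-zeros vertex 𝟘 and the all-ones vertex 𝟙. -/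
open Complex Finset
open scoped Real Classical

noncomputable section

/-- The inner product on ℓ²: ⟨f,g⟩ = Σ f·conj(g). -/
def ip {α : Type*} [Fintype α] (f g : α → ℂ) : ℂ :=
  ∑ x, f x * (starRingEnd ℂ) (g x)

/-- Hamming weight: the number of nonzero coordinates. -/
def wt {N : ℕ} (γ : Vtx N) : ℕ := (Finset.univ.filter fun i => γ i ≠ 0).card

/-- Hadamard vector h_γ(v) = 2^{−N/2}·(−1)^{Σ v_i γ_i}. -/
def had (N : ℕ) (γ : Vtx N) : Vtx N → ℂ :=
  fun v => (Real.sqrt (2 ^ N) : ℂ)⁻¹ * (-1) ^ (∑ i, (v i).val * (γ i).val)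

/-- The Neumann vector h_{n,K} = binom(N,K)^{−1/2} Σ_{|γ|=K} h_γ. -/
def neu (N K : ℕ) : Vtx N → ℂ :=
  fun v => (Real.sqrt (N.choose K) : ℂ)⁻¹ *
    ∑ γ ∈ Finset.univ.filter (fun γ : Vtx N => wt γ = K), had N γ v

/-!
The Hadamard vectors are an orthonormal eigenbasis of the Laplacian, with eigenvalue `2 * |γ|`. So
an eigenvector `φ` is orthogonal to `neu N K` unless its eigenvalue is `2 * K`, and in that case
only the `h_γ` with `|γ| = K` occur in its expansion. All of these take the same nonzero value at
`𝟘`, and the same nonzero value at `𝟙`, so `φ 𝟘` and `φ 𝟙` are each a nonzero multiple of the sum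
of the coefficients of `φ`, and that sum is proportional to `⟨φ, neu N K⟩`.
-/

section Parity

variable {ι : Type*} [Fintype ι]

/-- The parity character `v ↦ (-1) ^ ∑ i, v i` of the elementary abelian 2-group `ι → ZMod 2`.
Multiplicative shifts of it, for the ring structure of `ι → ZMod 2`, are the Hadamard vectors up to
normalization. -/
def parityChar (ι : Type*) [Fintype ι] : AddChar (ι → ZMod 2) ℂ where
  toFun v := ∏ i, (-1) ^ (v i).val
  map_zero_eq_one' := by simp
  map_add_eq_mul' v w := by
    simp only [← AddChar.zmodChar_apply (neg_one_sq (R := ℂ)), Pi.add_apply,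
      AddChar.map_add_eq_mul, prod_mul_distrib]

lemma parityChar_apply (v : ι → ZMod 2) : parityChar ι v = ∏ i, (-1) ^ (v i).val := rfl

lemma parityChar_eq_neg_one_pow_hammingNorm (v : ι → ZMod 2) :
    parityChar ι v = (-1) ^ hammingNorm v := by
  have val_eq : ∀ a : ZMod 2, a.val = if a ≠ 0 then 1 else 0 := by decide
  simp only [parityChar_apply, prod_pow_eq_pow_sum, val_eq, sum_boole, hammingNorm, Nat.cast_id]

lemma conj_parityChar (v : ι → ZMod 2) : (starRingEnd ℂ) (parityChar ι v) = parityChar ι v := by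
  simp [parityChar_apply]

lemma parityChar_single [DecidableEq ι] (i : ι) (a : ZMod 2) :
    parityChar ι (Pi.single i a) = (-1) ^ a.val := by
  rw [parityChar_apply, Fintype.prod_eq_single i fun j hj => by simp [hj], Pi.single_eq_same]

lemma isPrimitive_parityChar : (parityChar ι).IsPrimitive := by
  intro γ hγ
  obtain ⟨i, hi⟩ := Function.ne_iff.mp hγ
  have val_eq_one : ∀ a : ZMod 2, a ≠ 0 → a.val = 1 := by decide
  refine AddChar.ne_one_iff.mpr ⟨Pi.single i 1, ?_⟩
  rw [AddChar.mulShift_apply, ← Pi.single_mul_right, mul_one, parityChar_single, val_eq_one _ hi]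
  norm_num

lemma sum_parityChar_mul [DecidableEq ι] (γ : ι → ZMod 2) :
    ∑ v, parityChar ι (v * γ) = if γ = 0 then 2 ^ Fintype.card ι else 0 := by
  rw [AddChar.sum_mulShift γ isPrimitive_parityChar]
  simp [ZMod.card]

end Parity

section Hamming

variable {ι : Type*} [Fintype ι] [DecidableEq ι]

lemma hammingDist_eq_one_iff {v w : ι → ZMod 2} :
    hammingDist v w = 1 ↔ ∃ i, v + Pi.single i 1 = w := by
  have ne_iff : ∀ a b : ZMod 2, a ≠ b ↔ a + 1 = b := by decide
  simp only [hammingDist, card_eq_one, Finset.ext_iff, mem_filter_univ, mem_singleton, funext_iff]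
  refine exists_congr fun i => forall_congr' fun j => ?_
  by_cases hj : j = i
  · subst hj; simp [ne_iff]
  · simp [hj]

lemma card_hammingNorm_eq (K : ℕ) :
    #{γ : ι → ZMod 2 | hammingNorm γ = K} = (Fintype.card ι).choose K := by
  have ite_ne_zero : ∀ a : ZMod 2, (if a = 0 then 0 else 1) = a := by decide
  rw [← card_univ, ← card_powersetCard]
  refine card_nbij' (fun γ => univ.filter (γ · ≠ 0)) (fun s i => if i ∈ s then 1 else 0) ?_ ?_ ?_ ?_
  · intro γ hγ
    simpa [hammingNorm] using hγ
  · intro s hs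
    simpa [hammingNorm] using hs
  · intro γ _
    ext i
    simp [ite_ne_zero]
  · intro s _
    ext i
    simp

end Hamming

section InnerProduct

variable {α : Type*} [Fintype α]

lemma ip_eq_dotProduct (f g : α → ℂ) : ip f g = f ⬝ᵥ star g := rfl

lemma ip_smul_left (c : ℂ) (f g : α → ℂ) : ip (c • f) g = c * ip f g := by
  simp [ip_eq_dotProduct]

lemma ip_smul_right (c : ℂ) (f g : α → ℂ) : ip f (c • g) = (starRingEnd ℂ) c * ip f g := by
  simp [ip_eq_dotProduct]

lemma ip_sum_right {κ : Type*} (s : Finset κ) (f : α → ℂ) (g : κ → α → ℂ) :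
    ip f (∑ k ∈ s, g k) = ∑ k ∈ s, ip f (g k) := by
  simp [ip_eq_dotProduct, dotProduct_sum]

lemma ip_sum_left {κ : Type*} (s : Finset κ) (f : κ → α → ℂ) (g : α → ℂ) :
    ip (∑ k ∈ s, f k) g = ∑ k ∈ s, ip (f k) g := by
  simp [ip_eq_dotProduct, sum_dotProduct]

end InnerProduct

lemma ofReal_sqrt_mul_self {a : ℝ} (ha : 0 ≤ a) : (√a : ℂ) * √a = a := by
  rw [← Complex.ofReal_mul, Real.mul_self_sqrt ha]

variable {N : ℕ}

lemma wt_eq_hammingNorm (γ : Vtx N) : wt γ = hammingNorm γ := rfl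

lemma card_wt_eq (N K : ℕ) : #{γ : Vtx N | wt γ = K} = N.choose K := by
  simpa only [Fintype.card_fin] using! card_hammingNorm_eq (ι := Fin N) K

section Hadamard

lemma had_apply (γ v : Vtx N) :
    had N γ v = (√(2 ^ N) : ℂ)⁻¹ * parityChar (Fin N) (v * γ) := by
  have val_mul : ∀ a b : ZMod 2, (a * b).val = a.val * b.val := by decide
  simp only [had, parityChar_apply, prod_pow_eq_pow_sum, Pi.mul_apply, val_mul]

lemma had_comm (γ v : Vtx N) : had N γ v = had N v γ := by
  rw [had_apply, had_apply, mul_comm v]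

lemma conj_had (γ v : Vtx N) : (starRingEnd ℂ) (had N γ v) = had N γ v := by
  simp [had_apply, conj_parityChar]

lemma had_vZero (γ : Vtx N) : had N γ (vZero N) = (√(2 ^ N) : ℂ)⁻¹ := by
  rw [had_apply, show vZero N = 0 from rfl, zero_mul, AddChar.map_zero_eq_one, mul_one]

lemma had_vOne (γ : Vtx N) :
    had N γ (vOne N) = (√(2 ^ N) : ℂ)⁻¹ * (-1) ^ wt γ := by
  rw [had_apply, show vOne N = 1 from rfl, one_mul, parityChar_eq_neg_one_pow_hammingNorm,
    wt_eq_hammingNorm]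

lemma had_add_single (γ v : Vtx N) (i : Fin N) :
    had N γ (v + Pi.single i 1) = (if γ i ≠ 0 then -1 else 1) * had N γ v := by
  have neg_one_pow_val : ∀ a : ZMod 2, (-1 : ℂ) ^ a.val = if a ≠ 0 then -1 else 1 := by
    intro a
    obtain rfl | rfl : a = 0 ∨ a = 1 := by revert a; decide
    · simp
    · simp [ZMod.val_one]
  rw [had_apply, had_apply, add_mul, AddChar.map_add_eq_mul, ← Pi.single_mul_left, one_mul,
    parityChar_single, neg_one_pow_val]
  ring

lemma ip_had_had (γ δ : Vtx N) : ip (had N γ) (had N δ) = if γ = δ then 1 else 0 := by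
  have add_eq_zero_iff : γ + δ = 0 ↔ γ = δ := by
    simp only [funext_iff, Pi.add_apply, Pi.zero_apply, CharTwo.add_eq_zero]
  have sqrt_mul_sqrt : (√(2 ^ N) : ℂ) * √(2 ^ N) = 2 ^ N := by
    rw [ofReal_sqrt_mul_self (by positivity), Complex.ofReal_pow, Complex.ofReal_ofNat]
  calc ip (had N γ) (had N δ)
      = (2 ^ N : ℂ)⁻¹ * ∑ v, parityChar (Fin N) (v * (γ + δ)) := by
        rw [ip, mul_sum]
        refine sum_congr rfl fun v _ => ?_
        rw [conj_had, had_apply, had_apply, mul_add, AddChar.map_add_eq_mul, ← sqrt_mul_sqrt]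
        ring
    _ = if γ = δ then 1 else 0 := by
        simp [sum_parityChar_mul, add_eq_zero_iff]

lemma sum_ip_had_mul_had (φ : Vtx N → ℂ) (v : Vtx N) :
    ∑ γ, ip φ (had N γ) * had N γ v = φ v :=
  calc ∑ γ, ip φ (had N γ) * had N γ v
      = ∑ w, φ w * ip (had N w) (had N v) := by
        simp only [ip, conj_had, sum_mul, mul_sum]
        rw [sum_comm]
        simp only [mul_assoc, had_comm]
    _ = φ v := by simp [ip_had_had]

end Hadamard

section Laplacian

lemma cubeAdj_iff {v w : Vtx N} : cubeAdj v w ↔ ∃ i, v + Pi.single i 1 = w :=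
  hammingDist_eq_one_iff

lemma isLinearMap_cubeLap (N : ℕ) : IsLinearMap ℂ (cubeLap N) where
  map_add f g := by
    ext v
    simp only [cubeLap, Pi.add_apply, ← sum_add_distrib, add_sub_add_comm]
  map_smul c f := by
    ext v
    simp only [cubeLap, Pi.smul_apply, smul_sum, smul_sub]

lemma cubeLap_had (γ : Vtx N) : cubeLap N (had N γ) = (2 * wt γ : ℂ) • had N γ := by
  ext v
  have flip_sub (i : Fin N) : had N γ v - had N γ (v + Pi.single i 1) =
      (if γ i ≠ 0 then 1 else 0) * (2 * had N γ v) := by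
    rw [had_add_single]
    split_ifs <;> ring
  simp only [cubeLap_apply, flip_sub, ← sum_mul, sum_boole, wt, Pi.smul_apply, smul_eq_mul]
  ring

lemma cubeLap_sum_had (N K : ℕ) :
    cubeLap N (∑ γ : Vtx N with wt γ = K, had N γ) =
      (2 * K : ℂ) • ∑ γ : Vtx N with wt γ = K, had N γ := by
  rw [← (isLinearMap_cubeLap N).mk'_apply, map_sum, smul_sum]
  refine sum_congr rfl fun γ hγ => ?_
  rw [IsLinearMap.mk'_apply, cubeLap_had, (mem_filter.mp hγ).2]

lemma ip_cubeLap_left (f g : Vtx N → ℂ) : ip (cubeLap N f) g = ip f (cubeLap N g) := by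
  have cubeAdj_comm (v w : Vtx N) : cubeAdj v w ↔ cubeAdj w v := by
    simp only [cubeAdj, ne_comm]
  have swap : ∑ v, ∑ w with cubeAdj v w, f w * (starRingEnd ℂ) (g v) =
      ∑ v, ∑ w with cubeAdj v w, f v * (starRingEnd ℂ) (g w) := by
    simp only [sum_filter]
    rw [sum_comm]
    simp only [cubeAdj_comm]
  simp only [ip, cubeLap, sum_mul, mul_sum, map_sum, map_sub, sub_mul, mul_sub, sum_sub_distrib,
    swap]

lemma ip_had_eq_zero_of_ne {φ : Vtx N → ℂ} {μ : ℂ} (hφ : cubeLap N φ = μ • φ) {γ : Vtx N}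
    (hμ : μ ≠ 2 * wt γ) : ip φ (had N γ) = 0 := by
  have h : μ * ip φ (had N γ) = 2 * wt γ * ip φ (had N γ) := by
    simpa only [hφ, cubeLap_had, ip_smul_left, ip_smul_right, map_mul, map_ofNat, map_natCast]
      using ip_cubeLap_left φ (had N γ)
  exact (mul_eq_mul_right_iff.mp h).resolve_left hμ

end Laplacian

section Neumann

lemma neu_eq_smul_sum (N K : ℕ) :
    neu N K = (√(N.choose K) : ℂ)⁻¹ • ∑ γ : Vtx N with wt γ = K, had N γ := by
  ext v
  simp [neu]

lemma cubeLap_neu (N K : ℕ) : cubeLap N (neu N K) = (2 * K : ℂ) • neu N K := by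
  rw [neu_eq_smul_sum, (isLinearMap_cubeLap N).map_smul, cubeLap_sum_had, smul_comm]

lemma ip_neu_right (φ : Vtx N → ℂ) (K : ℕ) :
    ip φ (neu N K) =
      (√(N.choose K) : ℂ)⁻¹ * ∑ γ : Vtx N with wt γ = K, ip φ (had N γ) := by
  simp [neu_eq_smul_sum, ip_smul_right, ip_sum_right]

lemma ip_neu_had (K : ℕ) (δ : Vtx N) :
    ip (neu N K) (had N δ) = if wt δ = K then (√(N.choose K) : ℂ)⁻¹ else 0 := by
  simp [neu_eq_smul_sum, ip_smul_left, ip_sum_left, ip_had_had]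

lemma ip_neu_self {K : ℕ} (hK : K ≤ N) : ip (neu N K) (neu N K) = 1 := by
  have choose_pos : (0 : ℝ) < N.choose K := by exact_mod_cast Nat.choose_pos hK
  have sqrt_ne_zero : (√(N.choose K) : ℂ) ≠ 0 :=
    Complex.ofReal_ne_zero.mpr (Real.sqrt_pos.mpr choose_pos).ne'
  have sqrt_mul_sqrt :
      (√(N.choose K) : ℂ) * √(N.choose K) = N.choose K := by
    rw [ofReal_sqrt_mul_self choose_pos.le, Complex.ofReal_natCast]
  calc ip (neu N K) (neu N K)
      = (√(N.choose K) : ℂ)⁻¹ * (N.choose K * (√(N.choose K) : ℂ)⁻¹) := by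
        rw [ip_neu_right, sum_congr rfl fun γ hγ => (ip_neu_had K γ).trans
          (if_pos (mem_filter.mp hγ).2), sum_const, card_wt_eq, nsmul_eq_mul]
    _ = 1 := by
        rw [← sqrt_mul_sqrt]
        field_simp

lemma ip_neu_eq_zero_of_ne {μ : ℂ} {φ : Vtx N → ℂ} {K : ℕ} (hφ : cubeLap N φ = μ • φ)
    (hμ : μ ≠ 2 * K) : ip φ (neu N K) = 0 := by
  rw [ip_neu_right, sum_eq_zero, mul_zero]
  intro γ hγ
  exact ip_had_eq_zero_of_ne hφ (by rwa [(mem_filter.mp hγ).2])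

lemma ip_neu_neu_eq_zero_of_ne {K K' : ℕ} (h : K ≠ K') : ip (neu N K) (neu N K') = 0 :=
  ip_neu_eq_zero_of_ne (cubeLap_neu N K) fun h2 => h (by simpa using h2)

lemma ip_neu_eq_zero_of_apply_eq_zero {φ : Vtx N → ℂ} {K : ℕ} {v : Vtx N} {c : ℂ}
    (hφ : cubeLap N φ = (2 * K : ℂ) • φ) (hc : c ≠ 0) (hv : ∀ γ, wt γ = K → had N γ v = c)
    (hφv : φ v = 0) : ip φ (neu N K) = 0 := by
  have coeff_eq_zero (γ : Vtx N) (hγ : wt γ ≠ K) : ip φ (had N γ) = 0 :=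
    ip_had_eq_zero_of_ne hφ fun h => hγ (by simpa using h.symm)
  have expansion : (∑ γ : Vtx N with wt γ = K, ip φ (had N γ)) * c = 0 :=
    calc (∑ γ : Vtx N with wt γ = K, ip φ (had N γ)) * c
        = ∑ γ : Vtx N with wt γ = K, ip φ (had N γ) * had N γ v := by
          rw [sum_mul]
          exact sum_congr rfl fun γ hγ => by rw [hv γ (mem_filter.mp hγ).2]
      _ = ∑ γ, ip φ (had N γ) * had N γ v :=
          sum_subset (filter_subset _ _) fun γ _ hγ => by
            rw [coeff_eq_zero γ (by simpa using hγ), zero_mul]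
      _ = 0 := by rw [sum_ip_had_mul_had, hφv]
  rw [ip_neu_right, (mul_eq_zero.mp expansion).resolve_right hc, mul_zero]

lemma ip_neu_eq_zero_of_vZero_or_vOne {φ : Vtx N → ℂ} {μ : ℂ} (K : ℕ) (hφ : cubeLap N φ = μ • φ)
    (h : φ (vZero N) = 0 ∨ φ (vOne N) = 0) : ip φ (neu N K) = 0 := by
  rcases ne_or_eq μ (2 * K) with hμ | rfl
  · exact ip_neu_eq_zero_of_ne hφ hμ
  have norm_ne_zero : (√(2 ^ N) : ℂ)⁻¹ ≠ 0 :=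
    inv_ne_zero (Complex.ofReal_ne_zero.mpr (by positivity))
  rcases h with hZero | hOne
  · exact ip_neu_eq_zero_of_apply_eq_zero hφ norm_ne_zero (fun γ _ => had_vZero γ) hZero
  · exact ip_neu_eq_zero_of_apply_eq_zero hφ
      (mul_ne_zero norm_ne_zero (pow_ne_zero K (neg_ne_zero.mpr one_ne_zero)))
      (fun γ hγ => by rw [had_vOne, hγ]) hOne

end Neumann

theorem stmt5_general (N : ℕ) :
    (∀ K ≤ N, ip (neu N K) (neu N K) = 1) ∧
    (∀ K ≤ N, cubeLap N (neu N K) = fun v => ((2 * K : ℕ) : ℂ) * neu N K v) ∧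
    (∀ K ≤ N, ∀ K' ≤ N, K ≠ K' → ip (neu N K) (neu N K') = 0) ∧
    (∀ K ≤ N, ∀ (φ : Vtx N → ℂ) (μ : ℂ), cubeLap N φ = (fun v => μ * φ v) →
      φ (vZero N) = 0 ∨ φ (vOne N) = 0 → ip φ (neu N K) = 0) := by
  refine ⟨fun K hK => ip_neu_self hK, fun K _ => ?_, fun K _ K' _ h => ip_neu_neu_eq_zero_of_ne h,
    fun K _ φ μ hφ h => ip_neu_eq_zero_of_vZero_or_vOne K hφ h⟩
  rw [cubeLap_neu]
  push_cast
  rfl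

/-- each h_{n,K} is a unit eigenvector of L(B_N) with eigenvalue
2K; the h_{n,K} are mutually orthogonal; and each h_{n,K} is orthogonal to
every eigenvector of L(B_N) vanishing at both 𝟘 and 𝟙. -/
theorem stmt5 (N : ℕ) (hN : 1 ≤ N) :
    (∀ K ≤ N, ip (neu N K) (neu N K) = 1) ∧
    (∀ K ≤ N, cubeLap N (neu N K) = fun v => ((2 * K : ℕ) : ℂ) * neu N K v) ∧
    (∀ K ≤ N, ∀ K' ≤ N, K ≠ K' → ip (neu N K) (neu N K') = 0) ∧
    (∀ K ≤ N, ∀ (φ : Vtx N → ℂ) (μ : ℂ), φ ≠ 0 →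
      cubeLap N φ = (fun v => μ * φ v) →
      φ (vZero N) = 0 → φ (vOne N) = 0 → ip φ (neu N K) = 0) := by
  obtain ⟨unit, eigen, orth, vanish⟩ := stmt5_general N
  exact ⟨unit, eigen, orth, fun K hK φ μ _ hφ hZero _ => vanish K hK φ μ hφ (Or.inl hZero)⟩
end
end

section
/- Let N ≥ 1, m ≥ 3, ν ∈ {0,1,…,m−1}, and set α = e^{2πiν/m}. If f : V → ℂ satisfies L_α f = λ f, where L_α = L(B_N) + C_α is the augmented Laplacian, then the function φ on V × ZMod m defined by φ(u,k) = e^{2πiνk/m} f(u) satisfies L(B_N ⊢ C_m)φ = λ φ. -/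
open Complex Finset
open scoped Real Classical

noncomputable section

/-- The corner operator C_α. -/
def corner (N : ℕ) (α : ℂ) (f : Vtx N → ℂ) : Vtx N → ℂ :=
  fun v =>
    if v = vZero N then f (vZero N) - f (vOne N) / α
    else if v = vOne N then f (vOne N) - α * f (vZero N)
    else 0

/-- The augmented Laplacian L_α = L(B_N) + C_α. -/
def augLap (N : ℕ) (α : ℂ) (f : Vtx N → ℂ) : Vtx N → ℂ :=
  fun v => cubeLap N f v + corner N α f v

/-! At every vertex of `B_N ⊢ C_m` the edges are the cube edges inside its layer and, at a corner,
one link to a neighbouring layer. Multiplication by a character `χ` of `ZMod m` commutes with the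
cube Laplacian of each layer, and across a link `χ` changes by the factor `χ 1` or its inverse,
which is the twist in the corner operator `C_α` with `α = χ 1`. Hence `f ↦ χ ⊗ f` intertwines `L_α`
with `L(B_N ⊢ C_m)`. -/

lemma vZero_ne_vOne {N : ℕ} (hN : 1 ≤ N) : vZero N ≠ vOne N :=
  fun h => zero_ne_one (congrFun h ⟨0, hN⟩)

/-- The neighbours of `(u, k)` in `B_N ⊢ C_m` along the links, the edges `(𝟙, j) ~ (𝟘, j + 1)` that
join the copies of the cube. It has the shape of the definition of `corner`, so for `N = 0`, where
`𝟘 = 𝟙`, it records only one of the two links. -/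
def linkNeighbors (N m : ℕ) (u : Vtx N) (k : ZMod m) : Finset (Vtx N × ZMod m) :=
  if u = vZero N then {(vOne N, k - 1)}
  else if u = vOne N then {(vZero N, k + 1)}
  else ∅

section Links

variable {N m : ℕ}

lemma mk_mem_linkNeighbors_iff (hN : 1 ≤ N) {u w : Vtx N} {k l : ZMod m} :
    (w, l) ∈ linkNeighbors N m u k ↔
      (u = vOne N ∧ w = vZero N ∧ l = k + 1) ∨ (u = vZero N ∧ w = vOne N ∧ k = l + 1) := by
  have hcorners := vZero_ne_vOne hN
  unfold linkNeighbors
  split_ifs with hzero hone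
  · simp [hzero, hcorners, eq_sub_iff_add_eq, eq_comm]
  · simp [hone, hcorners.symm]
  · simp [hzero, hone]

lemma snd_ne_of_mem_linkNeighbors (hm : 1 < m) {u : Vtx N} {k : ZMod m} {y : Vtx N × ZMod m}
    (hy : y ∈ linkNeighbors N m u k) : y.2 ≠ k := by
  have : Fact (1 < m) := ⟨hm⟩
  unfold linkNeighbors at hy
  split_ifs at hy <;> simp_all

lemma filter_subAdj [NeZero m] (hN : 1 ≤ N) (u : Vtx N) (k : ZMod m) :
    univ.filter (subAdj N m (u, k)) = univ.filter (cubeAdj u) ×ˢ {k} ∪ linkNeighbors N m u k := by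
  ext ⟨w, l⟩
  simp only [subAdj, mem_filter, mem_univ, true_and, mem_union, mem_product, mem_singleton,
    mk_mem_linkNeighbors_iff hN, and_comm, eq_comm (a := k) (b := l)]

lemma disjoint_layer_linkNeighbors (hm : 1 < m) (s : Finset (Vtx N)) (u : Vtx N) (k : ZMod m) :
    Disjoint (s ×ˢ {k}) (linkNeighbors N m u k) :=
  disjoint_left.mpr fun _ hlayer hlink =>
    snd_ne_of_mem_linkNeighbors hm hlink (mem_singleton.mp (mem_product.mp hlayer).2)

lemma subLap_apply [NeZero m] (hN : 1 ≤ N) (hm : 1 < m) (φ : Vtx N × ZMod m → ℂ)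
    (u : Vtx N) (k : ZMod m) :
    subLap N m φ (u, k) =
      cubeLap N (fun w => φ (w, k)) u + ∑ y ∈ linkNeighbors N m u k, (φ (u, k) - φ y) := by
  simp only [subLap, cubeLap]
  rw [filter_subAdj hN, sum_union (disjoint_layer_linkNeighbors hm _ u k), sum_product]
  simp only [sum_singleton]

lemma cubeLap_const_mul (c : ℂ) (f : Vtx N → ℂ) (u : Vtx N) :
    cubeLap N (fun w => c * f w) u = c * cubeLap N f u := by
  simp only [cubeLap, mul_sum, mul_sub]

lemma sum_linkNeighbors_addChar_mul (χ : AddChar (ZMod m) ℂ) (f : Vtx N → ℂ)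
    (u : Vtx N) (k : ZMod m) :
    ∑ y ∈ linkNeighbors N m u k, (χ k * f u - χ y.2 * f y.1) = χ k * corner N (χ 1) f u := by
  unfold linkNeighbors corner
  split_ifs with hzero hone
  · rw [sum_singleton, hzero, AddChar.map_sub_eq_div]
    ring
  · rw [sum_singleton, hone, AddChar.map_add_eq_mul]
    ring
  · rw [sum_empty, mul_zero]

end Links

lemma stdAddChar_mulShift_natCast_apply {m : ℕ} [NeZero m] (ν : ℕ) (k : ZMod m) :
    ZMod.stdAddChar.mulShift (ν : ZMod m) k =
      Complex.exp (2 * (π : ℂ) * Complex.I * ν * k.val / m) := by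
  have hcast : (ν : ZMod m) * k = ((ν * k.val : ℤ) : ZMod m) := by simp
  rw [AddChar.mulShift_apply, hcast, ZMod.stdAddChar_coe]
  push_cast
  ring_nf

lemma stdAddChar_mulShift_natCast_one {m : ℕ} [NeZero m] (ν : ℕ) :
    ZMod.stdAddChar.mulShift (ν : ZMod m) 1 = Complex.exp (2 * (π : ℂ) * Complex.I * ν / m) := by
  rw [AddChar.mulShift_apply, mul_one]
  simpa only [Int.cast_natCast] using ZMod.stdAddChar_coe (N := m) (ν : ℤ)

theorem stmt8_general {N m : ℕ} [NeZero m] (hN : 1 ≤ N) (hm : 1 < m)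
    (χ : AddChar (ZMod m) ℂ) (f : Vtx N → ℂ) :
    subLap N m (fun x => χ x.2 * f x.1) = fun x => χ x.2 * augLap N (χ 1) f x.1 := by
  funext ⟨u, k⟩
  calc subLap N m (fun x => χ x.2 * f x.1) (u, k)
      = cubeLap N (fun w => χ k * f w) u +
          ∑ y ∈ linkNeighbors N m u k, (χ k * f u - χ y.2 * f y.1) := subLap_apply hN hm _ u k
    _ = χ k * cubeLap N f u + χ k * corner N (χ 1) f u := by
      rw [cubeLap_const_mul, sum_linkNeighbors_addChar_mul]
    _ = χ k * augLap N (χ 1) f u := (mul_add _ _ _).symm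

/-- if L_α f = λf with α = e^{2πiν/m}, then
φ(u,k) = e^{2πiνk/m} f(u) satisfies L(B_N ⊢ C_m)φ = λφ. -/
theorem stmt8 (N m : ℕ) [NeZero m] (hN : 1 ≤ N) (hm : 3 ≤ m)
    (ν : ℕ) (hν : ν < m) (f : Vtx N → ℂ) (lam : ℂ)
    (heig : augLap N (Complex.exp (2 * (π : ℂ) * Complex.I * ν / m)) f =
      fun v => lam * f v) :
    subLap N m
        (fun x => Complex.exp (2 * (π : ℂ) * Complex.I * ν * x.2.val / m) * f x.1) =
      fun x => lam *
        (Complex.exp (2 * (π : ℂ) * Complex.I * ν * x.2.val / m) * f x.1) := by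
  simp only [← stdAddChar_mulShift_natCast_apply, ← stdAddChar_mulShift_natCast_one] at heig ⊢
  simp only [stmt8_general hN (by lia : 1 < m), heig, mul_left_comm]
end
end

section
/- Let N ≥ 1 and m ≥ 3. Suppose that d_1, …, d_{2^N − N − 1} are eigenvectors of L(B_N), each vanishing at both 𝟘 and 𝟙, which form a basis of the orthogonal complement of the Neumann subspace span{h_{n,0},…,h_{n,N}} in ℓ²(V); and suppose that for each ν ∈ {0,…,m−1}, with α_ν = e^{2πiν/m}, the vectors f_{ν,0}, …, f_{ν,N} are nonzero, pairwise orthogonal eigenvectors of the augmented Laplacian L_{α_ν} lying in the Neumann subspace. Then the m·(2^N − N − 1) Dirichlet-type functions ι_k d_j (k ∈ ZMod m) together with the m·(N+1) Neumann-type functions Φ_{ν,i}(u,k) = e^{2πiνk/m} f_{ν,i}(u) are all eigenvectors of L(B_N ⊢ C_m), and together these m·2^N functions form a basis of ℓ²(V × ZMod m). -/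
open Complex Finset
open scoped Real Classical

noncomputable section

/-- The Neumann subspace span{h_{n,0},…,h_{n,N}}. -/
def Nsub (N : ℕ) : Submodule ℂ (Vtx N → ℂ) :=
  Submodule.span ℂ (Set.range fun K : Fin (N + 1) => neu N K)

/-!
Functions on `V × ZMod m` are spanned by products `g(u) h(k)`, and the Laplacian of `B_N ⊢ C_m`
acts on such a product as `L(B_N)` in the first variable plus corner terms comparing `h k` with
`h (k ± 1)`. If `g` vanishes at both corners, the corner terms vanish whatever `h` is, so `ι_k`
intertwines the two Laplacians; if `h` is a character, then `h (k ± 1) = h(1)^{±1} h k`, so the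
corner terms become the corner operator `C_α` with `α = h(1)`, and `g ↦ g ⊗ h` intertwines `L_α`
with the Laplacian.

For spanning, let `S` be the span of all the given products. Each `d_j ⊗ h` lies in `S`, because
point masses span the functions `h`. Hence, for a character `ψ_ν`, every `g ⊗ ψ_ν` lies in `S`,
because the `d_j` together with the `f_{ν,i}` span the functions `g`. The characters span the
functions `h` too, so `S` is everything, and linear independence follows by counting.
-/

section OuterProduct

variable {R V G ι κ n : Type*} [CommSemiring R]

/-- The outer product `g ⊗ h : (u, k) ↦ h k * g u` of functions on the two factors of `V × G`. Both
`ι_k g = g ⊗ δ_k` and `Φ = f ⊗ ψ`, with `ψ` a character, have this form. -/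
def outer : (V → R) →ₗ[R] (G → R) →ₗ[R] (V × G → R) :=
  LinearMap.mk₂ R (fun g h x => h x.2 * g x.1)
    (fun _ _ _ => by ext; simp [mul_add])
    (fun _ _ _ => by ext; simp [mul_left_comm])
    (fun _ _ _ => by ext; simp [add_mul])
    (fun _ _ _ => by ext; simp [mul_assoc])

lemma outer_apply (g : V → R) (h : G → R) (x : V × G) : outer g h x = h x.2 * g x.1 := rfl

lemma outer_single [DecidableEq G] (g : V → R) (k : G) :
    outer g (Pi.single k 1) = fun x => if x.2 = k then g x.1 else 0 := by
  ext x
  simp [outer_apply, Pi.single_apply]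

lemma map₂_outer_top_top [Finite G] :
    Submodule.map₂ (outer (R := R) (V := V) (G := G)) ⊤ ⊤ = ⊤ := by
  classical
  cases nonempty_fintype G
  refine eq_top_iff.2 fun F _ => ?_
  have hF : F = ∑ k, outer (fun u => F (u, k)) (Pi.single k 1) := by
    ext x
    simp [outer_single]
  rw [hF]
  exact Submodule.sum_mem _ fun k _ => Submodule.apply_mem_map₂ _ trivial trivial

lemma map₂_top_top_le_span_sumElim {E F P : Type*}
    [AddCommMonoid E] [AddCommMonoid F] [AddCommMonoid P] [Module R E] [Module R F] [Module R P]
    (B : E →ₗ[R] F →ₗ[R] P) {e : G → F} {h : n → F} {d : ι → E} {f : n → κ → E}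
    (he : Submodule.span R (Set.range e) = ⊤) (hh : Submodule.span R (Set.range h) = ⊤)
    (hdf : ∀ ν, Submodule.span R (Set.range d) ⊔ Submodule.span R (Set.range (f ν)) = ⊤) :
    Submodule.map₂ B ⊤ ⊤ ≤ Submodule.span R (Set.range (Sum.elim
      (fun p : G × ι => B (d p.2) (e p.1)) (fun p : n × κ => B (f p.1 p.2) (h p.1)))) := by
  set S := Submodule.span R (Set.range (Sum.elim
    (fun p : G × ι => B (d p.2) (e p.1)) (fun p : n × κ => B (f p.1 p.2) (h p.1))))
  have d_mem (j : ι) (y : F) : B (d j) y ∈ S := by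
    suffices Submodule.span R (Set.range e) ≤ S.comap (B (d j)) from
      this (he ▸ Submodule.mem_top)
    rw [Submodule.span_le]
    rintro _ ⟨k, rfl⟩
    exact Submodule.subset_span ⟨Sum.inl (k, j), rfl⟩
  have h_mem (ν : n) (x : E) : B x (h ν) ∈ S := by
    suffices Submodule.span R (Set.range d) ⊔ Submodule.span R (Set.range (f ν)) ≤
        S.comap (B.flip (h ν)) from this (hdf ν ▸ Submodule.mem_top)
    rw [sup_le_iff, Submodule.span_le, Submodule.span_le]
    constructor
    · rintro _ ⟨j, rfl⟩
      exact d_mem j (h ν)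
    · rintro _ ⟨i, rfl⟩
      exact Submodule.subset_span ⟨Sum.inr (ν, i), rfl⟩
  refine Submodule.map₂_le.2 fun x _ y _ => ?_
  suffices Submodule.span R (Set.range h) ≤ S.comap (B x) from this (hh ▸ Submodule.mem_top)
  rw [Submodule.span_le]
  rintro _ ⟨ν, rfl⟩
  exact h_mem ν x

lemma span_outer_single_sumElim_outer_eq_top [Finite G] [DecidableEq G]
    {h : n → G → R} {d : ι → V → R} {f : n → κ → V → R}
    (hh : Submodule.span R (Set.range h) = ⊤)
    (hdf : ∀ ν, Submodule.span R (Set.range d) ⊔ Submodule.span R (Set.range (f ν)) = ⊤) :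
    Submodule.span R (Set.range (Sum.elim
      (fun p : G × ι => outer (d p.2) (Pi.single p.1 1))
      (fun p : n × κ => outer (f p.1 p.2) (h p.1)))) = ⊤ := by
  have single_span : Submodule.span R (Set.range fun k : G => (Pi.single k 1 : G → R)) = ⊤ := by
    rw [← (Pi.basisFun R G).span_eq, ← funext (Pi.basisFun_apply R G)]
  have span_ge := map₂_top_top_le_span_sumElim (outer (V := V)) single_span hh hdf
  rwa [map₂_outer_top_top, top_le_iff] at span_ge

end OuterProduct

lemma span_range_addChar_eq_top {𝕜 G n : Type*} [Field 𝕜] [AddCommGroup G] [Fintype G]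
    [Fintype n] {ψ : n → AddChar G 𝕜} (hψ : Function.Injective ψ)
    (hcard : Fintype.card n = Fintype.card G) :
    Submodule.span 𝕜 (Set.range fun ν => (ψ ν : G → 𝕜)) = ⊤ := by
  have indep : LinearIndependent 𝕜 fun ν => (ψ ν : G → 𝕜) :=
    (linearIndependent_monoidHom (Multiplicative G) 𝕜).comp _
      (AddChar.toMonoidHomEquiv.injective.comp hψ)
  exact indep.span_eq_top_of_card_eq_finrank' (by simpa using hcard)

section Laplacian

variable {V G : Type*} [AddCommGroup G]

/-- Adjacency after substituting a copy of the graph `r` for each vertex of the Cayley graph of `G`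
with generator `s`: the edge from `k` to `k + s` becomes an edge from the corner `b` of the copy at
`k` to the corner `a` of the copy at `k + s`. -/
def substRel (r : V → V → Prop) (a b : V) (s : G) (x y : V × G) : Prop :=
  (x.2 = y.2 ∧ r x.1 y.1) ∨ (x.1 = b ∧ y.1 = a ∧ y.2 = x.2 + s) ∨
    (x.1 = a ∧ y.1 = b ∧ x.2 = y.2 + s)

instance [DecidableEq V] [DecidableEq G] (r : V → V → Prop) [DecidableRel r] (a b : V) (s : G) :
    DecidableRel (substRel r a b s) := fun x y => by
  unfold substRel
  infer_instance

variable {R : Type*} [CommRing R] [Fintype V]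

/-- The unnormalized Laplacian of the graph with adjacency relation `r`. -/
def relLaplacian (r : V → V → Prop) [DecidableRel r] : (V → R) →ₗ[R] (V → R) where
  toFun f v := ∑ w with r v w, (f v - f w)
  map_add' f g := by
    ext v
    simp only [Pi.add_apply, add_sub_add_comm, Finset.sum_add_distrib]
  map_smul' c f := by
    ext v
    simp only [Pi.smul_apply, smul_eq_mul, ← mul_sub, Finset.mul_sum, RingHom.id_apply]

lemma relLaplacian_apply (r : V → V → Prop) [DecidableRel r] (f : V → R) (v : V) :
    relLaplacian r f v = ∑ w with r v w, (f v - f w) := rfl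

variable [Fintype G] [DecidableEq V] [DecidableEq G] (r : V → V → Prop) [DecidableRel r]
  {a b : V} {s : G}

lemma relLaplacian_substRel_apply (hab : a ≠ b) (hs : s ≠ 0) (F : V × G → R) (u : V) (k : G) :
    relLaplacian (substRel r a b s) F (u, k) =
      relLaplacian r (fun w => F (w, k)) u +
        (if u = b then F (u, k) - F (a, k + s) else 0) +
        (if u = a then F (u, k) - F (b, k - s) else 0) := by
  -- The three kinds of edges exclude each other because `s ≠ 0` and `a ≠ b`.
  have edges (y : V × G) : (if substRel r a b s (u, k) y then F (u, k) - F y else 0) =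
      (if k = y.2 then (if r u y.1 then F (u, k) - F y else 0) else 0) +
        (if y = (a, k + s) then (if u = b then F (u, k) - F y else 0) else 0) +
        (if y = (b, k - s) then (if u = a then F (u, k) - F y else 0) else 0) := by
    obtain ⟨w, l⟩ := y
    simp only [substRel, Prod.mk.injEq]
    by_cases hkl : k = l
    · subst hkl
      simp [hs, eq_comm (a := k) (b := k - s)]
    · have pred_iff : k = l + s ↔ l = k - s := by rw [eq_sub_iff_add_eq, eq_comm]
      grind
  rw [relLaplacian_apply, relLaplacian_apply, Finset.sum_filter, Finset.sum_filter,
    Finset.sum_congr rfl fun y _ => edges y, Finset.sum_add_distrib, Finset.sum_add_distrib,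
    Fintype.sum_prod_type]
  simp only [Finset.sum_ite_eq, Finset.sum_ite_eq', Finset.mem_univ, if_true]

lemma relLaplacian_substRel_outer_apply (hab : a ≠ b) (hs : s ≠ 0) (g : V → R) (h : G → R)
    (u : V) (k : G) :
    relLaplacian (substRel r a b s) (outer g h) (u, k) =
      h k * relLaplacian r g u +
        (if u = b then h k * g b - h (k + s) * g a else 0) +
        (if u = a then h k * g a - h (k - s) * g b else 0) := by
  have slice : (fun w => outer g h (w, k)) = h k • g := rfl
  rw [relLaplacian_substRel_apply r hab hs, slice, map_smul]
  simp only [Pi.smul_apply, smul_eq_mul, outer_apply]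
  grind

lemma relLaplacian_substRel_outer_of_eq_zero (hab : a ≠ b) (hs : s ≠ 0) {g : V → R}
    (ha : g a = 0) (hb : g b = 0) (h : G → R) :
    relLaplacian (substRel r a b s) (outer g h) = outer (relLaplacian r g) h := by
  ext ⟨u, k⟩
  simp [relLaplacian_substRel_outer_apply r hab hs, ha, hb, outer_apply]

variable {𝕜 : Type*} [Field 𝕜]

/-- The augmented Laplacian: the Laplacian of `r` plus the corner operator `C_α` at `a` and `b`. -/
def augLaplacian (a b : V) (α : 𝕜) (f : V → 𝕜) : V → 𝕜 :=
  fun v => relLaplacian r f v +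
    if v = a then f a - f b / α else if v = b then f b - α * f a else 0

lemma relLaplacian_substRel_outer_addChar (hab : a ≠ b) (hs : s ≠ 0) (ψ : AddChar G 𝕜)
    (g : V → 𝕜) :
    relLaplacian (substRel r a b s) (outer g ψ) = outer (augLaplacian r a b (ψ s) g) ψ := by
  ext ⟨u, k⟩
  rw [relLaplacian_substRel_outer_apply r hab hs, outer_apply, augLaplacian,
    AddChar.map_add_eq_mul, AddChar.map_sub_eq_div]
  rcases eq_or_ne u a with rfl | ha
  · simp only [if_neg hab, if_true]
    ring
  · rcases eq_or_ne u b with rfl | hb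
    · simp only [if_neg hab.symm, if_true]
      ring
    · simp [ha, hb]

theorem stmt9_general {ι κ n : Type*} [Fintype ι] [Fintype κ] [Fintype n]
    (hab : a ≠ b) (hs : s ≠ 0)
    {ψ : n → AddChar G 𝕜} (hψ : Function.Injective ψ) (hn : Fintype.card n = Fintype.card G)
    {d : ι → V → 𝕜} {f : n → κ → V → 𝕜}
    (hd_eig : ∀ j, ∃ μ : 𝕜, relLaplacian r (d j) = μ • d j)
    (hda : ∀ j, d j a = 0) (hdb : ∀ j, d j b = 0)
    (hf_eig : ∀ ν i, ∃ μ : 𝕜, augLaplacian r a b (ψ ν s) (f ν i) = μ • f ν i)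
    (hspan : ∀ ν, Submodule.span 𝕜 (Set.range d) ⊔ Submodule.span 𝕜 (Set.range (f ν)) = ⊤)
    (hcard : Fintype.card ι + Fintype.card κ = Fintype.card V) :
    (∀ (k : G) (j), ∃ μ : 𝕜, relLaplacian (substRel r a b s) (outer (d j) (Pi.single k 1)) =
      μ • outer (d j) (Pi.single k 1)) ∧
    (∀ ν i, ∃ μ : 𝕜, relLaplacian (substRel r a b s) (outer (f ν i) (ψ ν)) =
      μ • outer (f ν i) (ψ ν)) ∧
    LinearIndependent 𝕜 (Sum.elim
      (fun p : G × ι => outer (d p.2) (Pi.single p.1 1))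
      (fun p : n × κ => outer (f p.1 p.2) (ψ p.1))) ∧
    Submodule.span 𝕜 (Set.range (Sum.elim
      (fun p : G × ι => outer (d p.2) (Pi.single p.1 1))
      (fun p : n × κ => outer (f p.1 p.2) (ψ p.1)))) = ⊤ := by
  refine ⟨fun k j => ?_, fun ν i => ?_, ?_⟩
  · obtain ⟨μ, hμ⟩ := hd_eig j
    exact ⟨μ, by rw [relLaplacian_substRel_outer_of_eq_zero r hab hs (hda j) (hdb j), hμ, map_smul,
      LinearMap.smul_apply]⟩
  · obtain ⟨μ, hμ⟩ := hf_eig ν i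
    exact ⟨μ, by rw [relLaplacian_substRel_outer_addChar r hab hs, hμ, map_smul,
      LinearMap.smul_apply]⟩
  · have span_eq_top := span_outer_single_sumElim_outer_eq_top
      (span_range_addChar_eq_top hψ hn) hspan
    refine ⟨linearIndependent_of_top_le_span_of_card_eq_finrank span_eq_top.ge ?_, span_eq_top⟩
    simp only [Fintype.card_sum, Fintype.card_prod, Module.finrank_fintype_fun_eq_card, hn,
      ← mul_add, hcard, mul_comm]

end Laplacian

section RootsOfUnity

variable (m : ℕ) [NeZero m]

/-- The character `ψ_ν : k ↦ e^{2πiνk/m}` of `ZMod m`. -/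
def zmodChar (ν : Fin m) : AddChar (ZMod m) ℂ :=
  AddChar.zmodAddEquiv (ν.val : ZMod m)

lemma zmodChar_injective : Function.Injective (zmodChar m) := by
  refine AddChar.zmodAddEquiv.injective.comp fun ν ν' h => Fin.ext ?_
  exact CharP.natCast_injOn_Iio (ZMod m) m ν.isLt ν'.isLt h

variable {m}

lemma zmodChar_natCast (ν : Fin m) (k : ℕ) :
    zmodChar m ν k = Complex.exp (2 * (π : ℂ) * Complex.I * ν.val * k / m) := by
  change (AddChar.zmod m (ν.val : ZMod m) k : ℂ) = _
  rw [← Int.cast_natCast ν.val, ← Int.cast_natCast k, AddChar.zmod_intCast, Circle.coe_exp]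
  push_cast
  ring_nf

lemma exp_mul_val_eq_zmodChar (ν : Fin m) (k : ZMod m) :
    Complex.exp (2 * (π : ℂ) * Complex.I * ν.val * k.val / m) = zmodChar m ν k := by
  rw [← zmodChar_natCast, ZMod.natCast_zmod_val]

lemma exp_eq_zmodChar_one (ν : Fin m) :
    Complex.exp (2 * (π : ℂ) * Complex.I * ν.val / m) = zmodChar m ν 1 := by
  simpa using (zmodChar_natCast ν 1).symm

end RootsOfUnity

lemma linearIndependent_of_ip_eq_zero {α ι : Type*} [Fintype α] {g : ι → α → ℂ}
    (hne : ∀ i, g i ≠ 0) (horth : ∀ i j, i ≠ j → ip (g i) (g j) = 0) :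
    LinearIndependent ℂ g := by
  refine LinearIndependent.of_comp (WithLp.linearEquiv 2 ℂ (α → ℂ)).symm.toLinearMap
    (linearIndependent_of_ne_zero_of_inner_eq_zero (𝕜 := ℂ) (fun i => ?_) fun i j hij => ?_)
  · simpa using hne i
  · exact horth j i hij.symm

lemma span_range_eq_Nsub {N : ℕ} {g : Fin (N + 1) → Vtx N → ℂ} (hne : ∀ i, g i ≠ 0)
    (horth : ∀ i j, i ≠ j → ip (g i) (g j) = 0) (hmem : ∀ i, g i ∈ Nsub N) :
    Submodule.span ℂ (Set.range g) = Nsub N := by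
  apply Submodule.eq_of_le_of_finrank_le (Submodule.span_le.2 (Set.range_subset_iff.2 hmem))
  rw [finrank_span_eq_card (linearIndependent_of_ip_eq_zero hne horth)]
  exact finrank_range_le_card _

lemma card_dirichlet_add_card_neumann (N : ℕ) :
    Fintype.card (Fin (2 ^ N - N - 1)) + Fintype.card (Fin (N + 1)) = Fintype.card (Vtx N) := by
  have hlt : N < 2 ^ N := Nat.lt_two_pow_self
  simp only [Fintype.card_fin, Fintype.card_pi, ZMod.card, Finset.prod_const, Finset.card_univ]
  omega

lemma iota_eq_outer {N m : ℕ} (k : ZMod m) (g : Vtx N → ℂ) :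
    iota k g = outer g (Pi.single k 1) :=
  (outer_single g k).symm

/-- the m(2^N−N−1) Dirichlet-type functions ι_k d_j together with
the m(N+1) Neumann-type functions Φ_{ν,i}(u,k) = e^{2πiνk/m} f_{ν,i}(u) are all
eigenvectors of L(B_N ⊢ C_m), and together form a basis of ℓ²(V × ZMod m). -/
theorem stmt9 (N m : ℕ) [NeZero m] (hN : 1 ≤ N) (hm : 3 ≤ m)
    (d : Fin (2 ^ N - N - 1) → (Vtx N → ℂ))
    (hd_eig : ∀ j, ∃ μ : ℂ, cubeLap N (d j) = fun v => μ * d j v)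
    (hd0 : ∀ j, d j (vZero N) = 0) (hd1 : ∀ j, d j (vOne N) = 0)
    (hd_indep : LinearIndependent ℂ d)
    (hd_orth : ∀ j, ∀ K : Fin (N + 1), ip (d j) (neu N K) = 0)
    (hd_span : Submodule.span ℂ (Set.range d) ⊔ Nsub N = ⊤)
    (f : Fin m → Fin (N + 1) → (Vtx N → ℂ))
    (hf_ne : ∀ ν i, f ν i ≠ 0)
    (hf_orth : ∀ ν i i', i ≠ i' → ip (f ν i) (f ν i') = 0)
    (hf_eig : ∀ ν i, ∃ μ : ℂ,
      augLap N (Complex.exp (2 * (π : ℂ) * Complex.I * ν.val / m)) (f ν i) =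
        fun v => μ * f ν i v)
    (hf_mem : ∀ ν i, f ν i ∈ Nsub N) :
    (∀ (k : ZMod m) (j), ∃ μ : ℂ,
      subLap N m (iota k (d j)) = fun x => μ * iota k (d j) x) ∧
    (∀ (ν : Fin m) (i : Fin (N + 1)), ∃ μ : ℂ,
      subLap N m
          (fun x => Complex.exp (2 * (π : ℂ) * Complex.I * ν.val * x.2.val / m) * f ν i x.1) =
        fun x => μ * (Complex.exp (2 * (π : ℂ) * Complex.I * ν.val * x.2.val / m) * f ν i x.1)) ∧
    LinearIndependent ℂ
      (Sum.elim
        (fun p : ZMod m × Fin (2 ^ N - N - 1) => iota p.1 (d p.2))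
        (fun p : Fin m × Fin (N + 1) => fun x : Vtx N × ZMod m =>
          Complex.exp (2 * (π : ℂ) * Complex.I * p.1.val * x.2.val / m) * f p.1 p.2 x.1)) ∧
    Submodule.span ℂ
      (Set.range
        (Sum.elim
          (fun p : ZMod m × Fin (2 ^ N - N - 1) => iota p.1 (d p.2))
          (fun p : Fin m × Fin (N + 1) => fun x : Vtx N × ZMod m =>
            Complex.exp (2 * (π : ℂ) * Complex.I * p.1.val * x.2.val / m) * f p.1 p.2 x.1))) =
      ⊤ := by
  have : Fact (1 < m) := ⟨by omega⟩
  have hspan (ν : Fin m) :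
      Submodule.span ℂ (Set.range d) ⊔ Submodule.span ℂ (Set.range (f ν)) = ⊤ := by
    rw [span_range_eq_Nsub (hf_ne ν) (hf_orth ν) (hf_mem ν), hd_span]
  simp only [exp_eq_zmodChar_one] at hf_eig
  simp only [iota_eq_outer, exp_mul_val_eq_zmodChar]
  exact stmt9_general cubeAdj (vZero_ne_vOne hN) one_ne_zero (zmodChar_injective m) (by simp)
    hd_eig hd0 hd1 hf_eig hspan (card_dirichlet_add_card_neumann N)
end
end
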